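/- For every integer n ≥ 1 and every prime power q, the cardinality of Res_n(F_q) equals Σ_d ϕ(n/d) · q^{n−1+d}, where the sum ranges over all divisors d of n such that n/d divides q−1. -/

import Mathlib

open Polynomial

/-- The resultant `Res(φ, ψ)` of a monic polynomial `φ` and a polynomial `ψ`, computed
(inside the algebraic closure) as the product `∏ ψ(αᵢ)` over the roots `αᵢ` of `φ`,
counted with multiplicity. -/
noncomputable def resultantAC {k : Type*} [Field k] (φ ψ : k[X]) : AlgebraicClosure k :=
  (((φ.map (algebraMap k (AlgebraicClosure k))).roots).map
    fun α => (ψ.map (algebraMap k (AlgebraicClosure k))).eval α).prod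

/-- `Res_n(k)`: the set of pairs `(φ, ψ)` of monic degree-`n` polynomials over `k`
with `Res(φ, ψ) = 1`. -/
def ResPairs (k : Type*) [Field k] (n : ℕ) : Set (k[X] × k[X]) :=
  {p | p.1.Monic ∧ p.1.natDegree = n ∧ p.2.Monic ∧ p.2.natDegree = n ∧
    resultantAC p.1 p.2 = 1}

/-!
Let `k` have `q` elements and let `φ` be monic of degree `n`. On the units of `k[X]/(φ)` the
resultant `Res(φ, ·)` is the norm, a homomorphism to `kˣ`, so the number of `ψ` with
`Res(φ, ψ) = 1` is `|(k[X]/(φ))ˣ| / (q - 1)` times the index of its image. The norm of a finite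
extension of finite fields is surjective, so by the Chinese remainder theorem the image contains
the `e`-th powers whenever an irreducible factor has multiplicity `e` in `φ`. As `kˣ` is cyclic,
a divisor `m` of `q - 1` divides the index exactly when `φ` is an `m`-th power, and the index is
the sum of `ϕ(m)` over these `m`. Exchanging the sums leaves the number of coprime pairs
`(g ^ m, ψ)`, that is, of coprime monic pairs `(g, ψ)` of degrees `n / m` and `n`; these are
counted by sorting all monic pairs by the degree of their gcd.
-/

section Norm

variable {k : Type*} [Field k]

theorem det_aeval_eq_resultant_charpoly_of_splits {ι : Type*} [Fintype ι] [DecidableEq ι]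
    (A : Matrix ι ι k) {r : k[X]} (hr : r.Splits) :
    (aeval A r).det = A.charpoly.resultant r := by
  let D : k[X] →* k := Matrix.detMonoidHom.comp (aeval A).toRingHom.toMonoidHom
  have hC (c : k) : D (C c) = c ^ Fintype.card ι := by
    simp [D, Algebra.algebraMap_eq_smul_one]
  have hX (a : k) : D (X - C a) = (-1) ^ Fintype.card ι * A.charpoly.eval a := by
    rw [Matrix.eval_charpoly, ← Matrix.det_neg]
    simp [D, Algebra.algebraMap_eq_smul_one, Matrix.smul_one_eq_diagonal, Matrix.scalar_apply]
  calc
    D r = D (C r.leadingCoeff * (r.roots.map (X - C ·)).prod) := by rw [← hr.eq_prod_roots]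
    _ = r.leadingCoeff ^ Fintype.card ι *
          (r.roots.map fun a ↦ (-1) ^ Fintype.card ι * A.charpoly.eval a).prod := by
      rw [map_mul, hC, map_multiset_prod, Multiset.map_map]
      simp only [Function.comp_def, hX]
    _ = A.charpoly.resultant r := by
      rw [resultant_comm, resultant_eq_prod_eval _ _ _ le_rfl hr, Multiset.prod_map_mul,
        Multiset.map_const', Multiset.prod_replicate, ← hr.natDegree_eq_card_roots,
        A.charpoly_natDegree_eq_dim, pow_mul]
      ring

theorem det_aeval_eq_resultant_charpoly {ι : Type*} [Fintype ι] [DecidableEq ι]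
    (A : Matrix ι ι k) (r : k[X]) : (aeval A r).det = A.charpoly.resultant r := by
  let j := algebraMap k (AlgebraicClosure k)
  have hj : (algebraMap (AlgebraicClosure k) (Matrix ι ι (AlgebraicClosure k))).comp j =
      j.mapMatrix.comp (algebraMap k (Matrix ι ι k)) := by
    ext c : 1
    exact (Matrix.map_algebraMap c j (map_zero j) rfl).symm
  apply j.injective
  rw [j.map_det, map_aeval_eq_aeval_map hj,
    det_aeval_eq_resultant_charpoly_of_splits _ (IsAlgClosed.splits _),
    RingHom.mapMatrix_apply, Matrix.charpoly_map, natDegree_map, natDegree_map, resultant_map_map]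

theorem norm_mk_eq_resultant {φ : k[X]} (hφ : φ.Monic) (r : k[X]) :
    Algebra.norm k (AdjoinRoot.mk φ r) = φ.resultant r := by
  let B := AdjoinRoot.powerBasis hφ.ne_zero
  have hchar : (Algebra.leftMulMatrix B.basis B.gen).charpoly = φ := by
    rw [charpoly_leftMulMatrix, AdjoinRoot.minpoly_powerBasis_gen_of_monic hφ]
  rw [← AdjoinRoot.aeval_eq, Algebra.norm_eq_matrix_det B.basis, ← aeval_algHom_apply,
    ← AdjoinRoot.powerBasis_gen hφ.ne_zero, det_aeval_eq_resultant_charpoly, hchar]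

theorem algebraMap_norm_mk {φ : k[X]} (hφ : φ.Monic) (r : k[X]) :
    algebraMap k (AlgebraicClosure k) (Algebra.norm k (AdjoinRoot.mk φ r)) = resultantAC φ r := by
  have h := resultant_eq_prod_eval (φ.map (algebraMap k (AlgebraicClosure k)))
    (r.map (algebraMap k (AlgebraicClosure k))) _ natDegree_map_le (IsAlgClosed.splits _)
  rw [natDegree_map, resultant_map_map, (hφ.map _).leadingCoeff, one_pow, one_mul] at h
  rw [norm_mk_eq_resultant hφ, h, resultantAC]

theorem resultantAC_eq_one_iff {φ : k[X]} (hφ : φ.Monic) (r : k[X]) :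
    resultantAC φ r = 1 ↔ Algebra.norm k (AdjoinRoot.mk φ r) = 1 := by
  rw [← algebraMap_norm_mk hφ, FaithfulSMul.algebraMap_eq_one_iff]

theorem norm_mk_mul_left {φ ψ : k[X]} (hφ : φ.Monic) (hψ : ψ.Monic) (r : k[X]) :
    Algebra.norm k (AdjoinRoot.mk (φ * ψ) r) =
      Algebra.norm k (AdjoinRoot.mk φ r) * Algebra.norm k (AdjoinRoot.mk ψ r) := by
  rw [norm_mk_eq_resultant (hφ.mul hψ), hφ.natDegree_mul hψ, resultant_mul_left _ _ _ _ le_rfl,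
    norm_mk_eq_resultant hφ, norm_mk_eq_resultant hψ]

theorem norm_mk_pow_left {φ : k[X]} (hφ : φ.Monic) (m : ℕ) (r : k[X]) :
    Algebra.norm k (AdjoinRoot.mk (φ ^ m) r) = Algebra.norm k (AdjoinRoot.mk φ r) ^ m := by
  rw [norm_mk_eq_resultant (hφ.pow m),
    resultant_pow_left _ _ _ _ (by simp [hφ.leadingCoeff]) le_rfl, norm_mk_eq_resultant hφ]

theorem isUnit_mk_iff_isCoprime {R : Type*} [CommRing R] {φ r : R[X]} :
    IsUnit (AdjoinRoot.mk φ r) ↔ IsCoprime φ r := by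
  simp_rw [isUnit_iff_exists_inv', AdjoinRoot.mk_surjective.exists, ← map_mul,
    ← map_one (AdjoinRoot.mk φ), AdjoinRoot.mk_eq_mk]
  constructor
  · rintro ⟨b, c, hc⟩
    exact ⟨-c, b, by linear_combination hc⟩
  · rintro ⟨a, b, hab⟩
    exact ⟨b, -a, by linear_combination hab⟩

theorem isUnit_of_norm_ne_zero {φ : k[X]} (hφ : φ.Monic) {u : AdjoinRoot φ}
    (hu : Algebra.norm k u ≠ 0) : IsUnit u := by
  obtain ⟨r, rfl⟩ := AdjoinRoot.mk_surjective u
  rw [norm_mk_eq_resultant hφ, ← isUnit_iff_ne_zero, isUnit_resultant_iff_isCoprime hφ] at hu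
  exact isUnit_mk_iff_isCoprime.2 hu

theorem exists_norm_mk_eq [Finite k] {p : k[X]} (hp : Irreducible p) (z : k) :
    ∃ v, Algebra.norm k (AdjoinRoot.mk p v) = z := by
  have : Fact (Irreducible p) := ⟨hp⟩
  have : FiniteDimensional k (AdjoinRoot p) := (AdjoinRoot.powerBasis hp.ne_zero).finite
  have : Finite (AdjoinRoot p) := Module.finite_of_finite k
  obtain ⟨u, hu⟩ := FiniteField.norm_surjective k (AdjoinRoot p) z
  obtain ⟨v, rfl⟩ := AdjoinRoot.mk_surjective u
  exact ⟨v, hu⟩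

end Norm

section Factorization

variable {k : Type*} [Field k]

open UniqueFactorizationMonoid in
theorem exists_monic_pow_eq_of_dvd_multiplicity {φ : k[X]} (hφ : φ.Monic) {m : ℕ} (hm : m ≠ 0)
    (h : ∀ p : k[X], p.Monic → Irreducible p → m ∣ multiplicity p φ) :
    ∃ g : k[X], g.Monic ∧ g ^ m = φ := by
  classical
  have hmonic (p : k[X]) (hp : p ∈ normalizedFactors φ) : p.Monic :=
    normalize_normalized_factor p hp ▸ monic_normalize (ne_zero_of_mem_normalizedFactors hp)
  obtain ⟨s, hs⟩ : ∃ s, normalizedFactors φ = m • s := by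
    refine Multiset.exists_smul_of_dvd_count _ fun p hp ↦ ?_
    have hirr := irreducible_of_normalized_factor p hp
    have := emultiplicity_eq_count_normalizedFactors hirr hφ.ne_zero
    rw [normalize_normalized_factor p hp] at this
    rw [← multiplicity_eq_of_emultiplicity_eq_some this]
    exact h p (hmonic p hp) hirr
  refine ⟨s.prod, ?_, ?_⟩
  · simpa using monic_multiset_prod_of_monic s id fun p hp ↦
      hmonic p (hs ▸ (Multiset.mem_nsmul_of_ne_zero hm).2 hp)
  · rw [← Multiset.prod_nsmul, ← hs, prod_normalizedFactors_eq hφ.ne_zero, hφ.normalize_eq_self]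

theorem exists_monic_pow_mul_eq {φ p : k[X]} (hφ : φ.Monic) (hpm : p.Monic) (hp : Irreducible p) :
    ∃ ψ : k[X], ψ.Monic ∧ IsCoprime p ψ ∧ p ^ multiplicity p φ * ψ = φ := by
  have hfin := FiniteMultiplicity.of_not_isUnit hp.not_isUnit hφ.ne_zero
  obtain ⟨ψ, hψ, hnd⟩ := hfin.exists_eq_pow_mul_and_not_dvd
  exact ⟨ψ, (hpm.pow _).of_mul_monic_left (hψ ▸ hφ), hp.coprime_iff_not_dvd.2 hnd, hψ.symm⟩

theorem exists_mk_eq_mk_of_isCoprime {R : Type*} [CommRing R] {A B : R[X]} (h : IsCoprime A B)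
    (a b : R[X]) :
    ∃ r, AdjoinRoot.mk A r = AdjoinRoot.mk A a ∧ AdjoinRoot.mk B r = AdjoinRoot.mk B b := by
  obtain ⟨u, v, huv⟩ := h
  simp_rw [AdjoinRoot.mk_eq_mk]
  exact ⟨a * (v * B) + b * (u * A), ⟨u * (b - a), by linear_combination a * huv⟩,
    ⟨v * (a - b), by linear_combination b * huv⟩⟩

end Factorization

section Index

variable {k : Type*} [Field k]

/-- The resultant `Res(φ, ·)` as a homomorphism on the units of `k[X]/(φ)`. It is encoded as the
norm of `k[X]/(φ)` over `k`, which is the resultant when `φ` is monic. -/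
noncomputable def resultantUnits (φ : k[X]) : (AdjoinRoot φ)ˣ →* kˣ :=
  Units.map (Algebra.norm k)

theorem mem_range_resultantUnits {φ : k[X]} (hφ : φ.Monic) {z : kˣ} :
    z ∈ (resultantUnits φ).range ↔ ∃ r, Algebra.norm k (AdjoinRoot.mk φ r) = z := by
  constructor
  · rintro ⟨u, rfl⟩
    obtain ⟨r, hr⟩ := AdjoinRoot.mk_surjective (u : AdjoinRoot φ)
    exact ⟨r, by rw [hr]; rfl⟩
  · rintro ⟨r, hr⟩
    have hu : IsUnit (AdjoinRoot.mk φ r) := isUnit_of_norm_ne_zero hφ (hr ▸ z.ne_zero)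
    exact ⟨hu.unit, Units.ext hr⟩

theorem range_powMonoidHom_le_range_resultantUnits [Finite k] {φ p : k[X]} (hφ : φ.Monic)
    (hpm : p.Monic) (hp : Irreducible p) :
    (powMonoidHom (multiplicity p φ)).range ≤ (resultantUnits φ).range := by
  rintro _ ⟨z, rfl⟩
  obtain ⟨ψ, hψ, hcop, hφψ⟩ := exists_monic_pow_mul_eq hφ hpm hp
  obtain ⟨v, hv⟩ := exists_norm_mk_eq hp (z : k)
  -- `Res(p ^ e * ψ, r) = Res(p, v) ^ e * Res(ψ, 1)` when `r ≡ v` mod `p` and `r ≡ 1` mod `ψ`.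
  obtain ⟨r, hrp, hrψ⟩ := exists_mk_eq_mk_of_isCoprime hcop v 1
  refine (mem_range_resultantUnits hφ).2 ⟨r, ?_⟩
  conv_lhs => rw [← hφψ]
  rw [norm_mk_mul_left (hpm.pow _) hψ, norm_mk_pow_left hpm, hrp, hrψ, hv]
  simp

theorem range_resultantUnits_pow_le {g : k[X]} (hg : g.Monic) {m : ℕ} (hm : m ≠ 0) :
    (resultantUnits (g ^ m)).range ≤ (powMonoidHom m).range := by
  intro z hz
  obtain ⟨r, hr⟩ := (mem_range_resultantUnits (hg.pow m)).1 hz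
  rw [norm_mk_pow_left hg] at hr
  have h0 : Algebra.norm k (AdjoinRoot.mk g r) ≠ 0 :=
    fun h ↦ z.ne_zero (by rw [← hr, h, zero_pow hm])
  exact ⟨Units.mk0 _ h0, Units.ext hr⟩

theorem dvd_index_range_resultantUnits_iff [Finite k] {φ : k[X]} (hφ : φ.Monic) {m : ℕ}
    (hm : m ∣ Nat.card kˣ) :
    m ∣ (resultantUnits φ).range.index ↔ ∃ g : k[X], g.Monic ∧ g ^ m = φ := by
  have hm0 : m ≠ 0 := ne_zero_of_dvd_ne_zero Nat.card_pos.ne' hm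
  constructor
  · intro h
    refine exists_monic_pow_eq_of_dvd_multiplicity hφ hm0 fun p hpm hp ↦ ?_
    have := Subgroup.index_dvd_of_le (range_powMonoidHom_le_range_resultantUnits hφ hpm hp)
    rw [IsCyclic.index_powMonoidHom_range] at this
    exact (h.trans this).trans (Nat.gcd_dvd_right _ _)
  · rintro ⟨g, hg, rfl⟩
    have := Subgroup.index_dvd_of_le (range_resultantUnits_pow_le hg hm0)
    rwa [IsCyclic.index_powMonoidHom_range, Nat.gcd_eq_right hm] at this

theorem card_mul_card_ker {G H : Type*} [Group G] [Group H] (f : G →* H) :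
    Nat.card H * Nat.card f.ker = Nat.card G * f.range.index := by
  rw [← f.ker.card_mul_index, Subgroup.index_ker, ← f.range.card_mul_index]
  ring

open Classical in
theorem index_range_resultantUnits [Finite k] {φ : k[X]} (hφ : φ.Monic) :
    (resultantUnits φ).range.index =
      ∑ m ∈ (Nat.card kˣ).divisors with ∃ g : k[X], g.Monic ∧ g ^ m = φ, m.totient := by
  have hdvd := (resultantUnits φ).range.index_dvd_card
  rw [← Nat.sum_totient (resultantUnits φ).range.index]
  refine Finset.sum_congr ?_ fun _ _ ↦ rfl
  rw [← Nat.divisors_filter_dvd_of_dvd Nat.card_pos.ne' hdvd]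
  exact Finset.filter_congr fun m hm ↦
    dvd_index_range_resultantUnits_iff hφ (Nat.dvd_of_mem_divisors hm)

end Index

section MonicPolynomials

variable {R : Type*} [CommRing R] [Nontrivial R]

/-- Monic polynomials of degree `n` are parametrized by their `n` lower coefficients. -/
noncomputable def isMonicOfDegreeEquiv (R : Type*) [CommRing R] [Nontrivial R] (n : ℕ) :
    {f : R[X] | IsMonicOfDegree f n} ≃ (Fin n → R) :=
  (Equiv.subtypeEquivRight fun _ ↦ ⟨fun h ↦ ⟨h.monic, h.natDegree_eq⟩, fun h ↦ ⟨h.2, h.1⟩⟩).trans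
    ((monicEquivDegreeLT n).trans (degreeLTEquiv R n).toEquiv)

theorem finite_setOf_isMonicOfDegree [Finite R] (n : ℕ) :
    {f : R[X] | IsMonicOfDegree f n}.Finite :=
  Finite.of_equiv _ (isMonicOfDegreeEquiv R n).symm

/-- The finite set of monic polynomials of degree `n` over a finite ring. -/
noncomputable def monicsOfDegree (R : Type*) [CommRing R] [Nontrivial R] [Finite R] (n : ℕ) :
    Finset R[X] :=
  (finite_setOf_isMonicOfDegree n).toFinset

@[simp]
theorem mem_monicsOfDegree [Finite R] {n : ℕ} {f : R[X]} :
    f ∈ monicsOfDegree R n ↔ IsMonicOfDegree f n := by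
  simp [monicsOfDegree]

theorem card_monicsOfDegree [Finite R] (n : ℕ) :
    (monicsOfDegree R n).card = Nat.card R ^ n := by
  rw [monicsOfDegree, ← Nat.card_eq_card_finite_toFinset,
    Nat.card_congr (isMonicOfDegreeEquiv R n)]
  simp [Nat.card_pi]

end MonicPolynomials

section CoprimePairs

variable {k : Type*} [Field k]

theorem exists_monic_mul_isCoprime {f g : k[X]} (hf : f.Monic) (hg : g.Monic) :
    ∃ c x y : k[X], c.Monic ∧ x.Monic ∧ y.Monic ∧ IsCoprime x y ∧ c * x = f ∧ c * y = g := by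
  classical
  obtain ⟨x, y, hx, hy, hxy⟩ := extract_gcd f g
  have hc : (gcd f g).Monic := by
    rw [← normalize_gcd]
    exact monic_normalize (gcd_ne_zero_of_left hf.ne_zero)
  exact ⟨gcd f g, x, y, hc, hc.of_mul_monic_left (hx ▸ hf), hc.of_mul_monic_left (hy ▸ hg),
    (gcd_isUnit_iff x y).1 hxy, hx.symm, hy.symm⟩

theorem dvd_of_isCoprime_of_dvd_mul_of_dvd_mul {R : Type*} [CommRing R] {a c x y : R}
    (h : IsCoprime x y) (hx : a ∣ c * x) (hy : a ∣ c * y) : a ∣ c := by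
  obtain ⟨u, v, huv⟩ := h
  have hc : c = u * (c * x) + v * (c * y) := by linear_combination -c * huv
  rw [hc]
  exact (hx.mul_left u).add (hy.mul_left v)

theorem eq_of_monic_of_isCoprime_of_mul_eq_mul {c c' x x' y y' : k[X]} (hc : c.Monic)
    (hc' : c'.Monic) (hxy : IsCoprime x y) (hxy' : IsCoprime x' y') (hx : c * x = c' * x')
    (hy : c * y = c' * y') : c = c' :=
  eq_of_monic_of_associated hc hc' <| associated_of_dvd_dvd
    (dvd_of_isCoprime_of_dvd_mul_of_dvd_mul hxy' (hx ▸ dvd_mul_right _ _) (hy ▸ dvd_mul_right _ _))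
    (dvd_of_isCoprime_of_dvd_mul_of_dvd_mul hxy (hx ▸ dvd_mul_right _ _) (hy ▸ dvd_mul_right _ _))

open Classical in
/-- The pairs of coprime monic polynomials of degrees `a` and `b` over a finite field. -/
noncomputable def coprimeMonicPairs (k : Type*) [Field k] [Finite k] (a b : ℕ) :
    Finset (k[X] × k[X]) :=
  {x ∈ monicsOfDegree k a ×ˢ monicsOfDegree k b | IsCoprime x.1 x.2}

theorem mem_coprimeMonicPairs [Finite k] {a b : ℕ} {x : k[X] × k[X]} :
    x ∈ coprimeMonicPairs k a b ↔
      IsMonicOfDegree x.1 a ∧ IsMonicOfDegree x.2 b ∧ IsCoprime x.1 x.2 := by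
  simp [coprimeMonicPairs, and_assoc]

theorem sum_card_pow_mul_card_coprimeMonicPairs [Finite k] (a b : ℕ) :
    ∑ i ∈ Finset.range (min a b + 1),
      Nat.card k ^ i * (coprimeMonicPairs k (a - i) (b - i)).card = Nat.card k ^ (a + b) := by
  -- A pair of monics is uniquely `(c * x, c * y)` with `c` monic and `x`, `y` coprime monics.
  let S := (Finset.range (min a b + 1)).sigma fun i ↦
    monicsOfDegree k i ×ˢ coprimeMonicPairs k (a - i) (b - i)
  have mem_S (i : ℕ) (c x y : k[X]) : ⟨i, c, x, y⟩ ∈ S ↔ (i ≤ a ∧ i ≤ b) ∧ IsMonicOfDegree c i ∧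
      IsMonicOfDegree x (a - i) ∧ IsMonicOfDegree y (b - i) ∧ IsCoprime x y := by
    simp [S, mem_coprimeMonicPairs]
  have hS : S.card = (monicsOfDegree k a ×ˢ monicsOfDegree k b).card := by
    refine Finset.card_bij (fun s _ ↦ (s.2.1 * s.2.2.1, s.2.1 * s.2.2.2)) ?mapsTo ?inj ?surj
    case mapsTo =>
      rintro ⟨i, c, x, y⟩ h
      obtain ⟨⟨hia, hib⟩, hc, hx, hy, -⟩ := (mem_S i c x y).1 h
      simpa [hia, hib] using And.intro (hc.mul hx) (hc.mul hy)
    case inj =>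
      rintro ⟨i, c, x, y⟩ h ⟨i', c', x', y'⟩ h' heq
      obtain ⟨-, hc, -, -, hxy⟩ := (mem_S i c x y).1 h
      obtain ⟨-, hc', -, -, hxy'⟩ := (mem_S i' c' x' y').1 h'
      obtain ⟨hx, hy⟩ := Prod.mk.inj heq
      obtain rfl := eq_of_monic_of_isCoprime_of_mul_eq_mul hc.monic hc'.monic hxy hxy' hx hy
      obtain rfl : i = i' := hc.natDegree_eq.symm.trans hc'.natDegree_eq
      simpa [hc.ne_zero] using heq
    case surj =>
      rintro ⟨f, g⟩ h
      obtain ⟨hf, hg⟩ : IsMonicOfDegree f a ∧ IsMonicOfDegree g b := by simpa using h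
      obtain ⟨c, x, y, hc, hx, hy, hxy, rfl, rfl⟩ := exists_monic_mul_isCoprime hf.monic hg.monic
      have ha := hc.natDegree_mul hx ▸ hf.natDegree_eq
      have hb := hc.natDegree_mul hy ▸ hg.natDegree_eq
      exact ⟨⟨c.natDegree, c, x, y⟩, (mem_S _ _ _ _).2 ⟨⟨by omega, by omega⟩, ⟨rfl, hc⟩,
        ⟨by omega, hx⟩, ⟨by omega, hy⟩, hxy⟩, rfl⟩
  simpa [S, card_monicsOfDegree, pow_add] using hS

-- Comparing the gcd counts for `(a, b)` and `(a - 1, b - 1)` isolates the term of gcd degree `0`.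
theorem card_coprimeMonicPairs [Finite k] {a b : ℕ} (ha : a ≠ 0) (hb : b ≠ 0) :
    (coprimeMonicPairs k a b).card = (Nat.card k - 1) * Nat.card k ^ (a + b - 1) := by
  obtain ⟨a, rfl⟩ := Nat.exists_eq_succ_of_ne_zero ha
  obtain ⟨b, rfl⟩ := Nat.exists_eq_succ_of_ne_zero hb
  have htail : ∑ i ∈ Finset.range (min a b + 1), Nat.card k ^ (i + 1) *
      (coprimeMonicPairs k (a - i) (b - i)).card = Nat.card k ^ (a + b + 1) := by
    simp_rw [pow_succ', mul_assoc, ← Finset.mul_sum, sum_card_pow_mul_card_coprimeMonicPairs]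
  have h := sum_card_pow_mul_card_coprimeMonicPairs (k := k) (a + 1) (b + 1)
  rw [Nat.add_min_add_right, Finset.sum_range_succ'] at h
  simp only [Nat.add_sub_add_right, htail, pow_zero, one_mul, Nat.sub_zero] at h
  rw [Nat.eq_sub_of_add_eq' h, Nat.sub_one_mul, ← pow_succ']
  congr 2
  omega

end CoprimePairs

section Residues

variable {R : Type*} [CommRing R] [Nontrivial R]

theorem bijOn_mk_isMonicOfDegree {φ : R[X]} {n : ℕ} (hφ : IsMonicOfDegree φ n) :
    Set.BijOn (AdjoinRoot.mk φ) {ψ | IsMonicOfDegree ψ n} Set.univ := by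
  have hdeg {f : R[X]} (hf : IsMonicOfDegree f n) : f.degree = n := by
    rw [degree_eq_natDegree hf.ne_zero, hf.natDegree_eq]
  refine ⟨Set.mapsTo_univ _ _, fun f hf g hg hfg ↦ ?_, fun u _ ↦ ?_⟩
  · have hlt : (f - g).degree < φ.degree := by
      rw [hdeg hφ, ← hdeg hf]
      exact degree_sub_lt_left ((hdeg hf).trans (hdeg hg).symm) hf.ne_zero
        (hf.leadingCoeff_eq.trans hg.leadingCoeff_eq.symm)
    by_contra h
    exact hφ.monic.not_dvd_of_degree_lt (sub_ne_zero.2 h) hlt (AdjoinRoot.mk_eq_mk.1 hfg)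
  · obtain ⟨r, rfl⟩ := AdjoinRoot.mk_surjective u
    have hlt := degree_modByMonic_lt r hφ.monic
    refine ⟨φ + r %ₘ φ, ⟨?_, hφ.monic.add_of_left hlt⟩, AdjoinRoot.mk_eq_mk.2 ?_⟩
    · rw [natDegree_add_eq_left_of_degree_lt hlt, hφ.natDegree_eq]
    · exact ⟨1 - r /ₘ φ, by linear_combination r.modByMonic_add_div φ⟩

open Classical in
theorem card_filter_mk_mem [Finite R] {φ : R[X]} {n : ℕ} (hφ : IsMonicOfDegree φ n)
    (S : Set (AdjoinRoot φ)) :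
    Finset.card {ψ ∈ monicsOfDegree R n | AdjoinRoot.mk φ ψ ∈ S} = S.ncard := by
  rw [← ((bijOn_mk_isMonicOfDegree hφ).subset_right S.subset_univ).ncard_eq,
    ← Set.ncard_coe_finset]
  congr 1
  ext ψ
  simp

open Classical in
theorem card_units_adjoinRoot [Finite R] {φ : R[X]} {n : ℕ} (hφ : IsMonicOfDegree φ n) :
    Nat.card (AdjoinRoot φ)ˣ = Finset.card {ψ ∈ monicsOfDegree R n | IsCoprime φ ψ} := by
  have h := card_filter_mk_mem hφ (Set.range Units.val)
  rw [← Nat.card_coe_set_eq, Nat.card_range_of_injective Units.val_injective] at h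
  simp_rw [← h, ← isUnit_mk_iff_isCoprime]
  rfl

end Residues

section ResultantKernel

variable {k : Type*} [Field k]

open Classical in
theorem card_ker_resultantUnits [Finite k] {φ : k[X]} {n : ℕ} (hφ : IsMonicOfDegree φ n) :
    Nat.card (resultantUnits φ).ker =
      Finset.card {ψ ∈ monicsOfDegree k n | resultantAC φ ψ = 1} := by
  have hker : Units.val '' ((resultantUnits φ).ker : Set (AdjoinRoot φ)ˣ) =
      {u | Algebra.norm k u = 1} := by
    ext u
    constructor
    · rintro ⟨v, hv, rfl⟩
      exact congrArg Units.val hv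
    · intro hu
      have hu' : IsUnit u := isUnit_of_norm_ne_zero hφ.monic (ne_of_eq_of_ne hu one_ne_zero)
      exact ⟨hu'.unit, Units.ext hu, rfl⟩
  have h := card_filter_mk_mem hφ {u | Algebra.norm k u = 1}
  rw [← hker, Set.ncard_image_of_injective _ Units.val_injective, ← Nat.card_coe_set_eq] at h
  simp_rw [resultantAC_eq_one_iff hφ.monic]
  exact (hker ▸ h).symm

theorem card_resPairs [Finite k] (n : ℕ) :
    Nat.card (ResPairs k n) = ∑ φ ∈ monicsOfDegree k n, Nat.card (resultantUnits φ).ker := by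
  classical
  have hpairs : ResPairs k n = ({x ∈ monicsOfDegree k n ×ˢ monicsOfDegree k n |
      resultantAC x.1 x.2 = 1} : Finset _) := by
    ext ⟨φ, ψ⟩
    simp only [ResPairs, Set.mem_ofPred_eq, Finset.coe_filter, Finset.mem_product,
      mem_monicsOfDegree, isMonicOfDegree_iff']
    tauto
  rw [hpairs, Nat.card_coe_set_eq, Set.ncard_coe_finset, Finset.card_filter, Finset.sum_product]
  refine Finset.sum_congr rfl fun φ hφ ↦ ?_
  rw [card_ker_resultantUnits (mem_monicsOfDegree.1 hφ), Finset.card_filter]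

end ResultantKernel

section PerfectPowers

variable {k : Type*} [Field k]

theorem card_coprimeMonicPairs_eq_sum [Finite k] {m : ℕ} (hm : 0 < m) (d : ℕ) :
    (coprimeMonicPairs k d (m * d)).card =
      ∑ g ∈ monicsOfDegree k d, Nat.card (AdjoinRoot (g ^ m))ˣ := by
  classical
  rw [coprimeMonicPairs, Finset.card_filter, Finset.sum_product]
  refine Finset.sum_congr rfl fun g hg ↦ ?_
  have hgm : IsMonicOfDegree (g ^ m) (m * d) := mul_comm m d ▸ (mem_monicsOfDegree.1 hg).pow m
  rw [card_units_adjoinRoot hgm, Finset.card_filter]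
  exact Finset.sum_congr rfl fun ψ _ ↦ if_congr (IsCoprime.pow_left_iff hm).symm rfl rfl

theorem injOn_pow_monicsOfDegree [Finite k] {m : ℕ} (hm : m ≠ 0) (d : ℕ) :
    Set.InjOn (· ^ m) (monicsOfDegree k d : Set k[X]) := by
  intro f hf g hg h
  rw [Finset.mem_coe, mem_monicsOfDegree] at hf hg
  refine eq_of_monic_of_associated hf.monic hg.monic (associated_of_dvd_dvd ?_ ?_)
  · exact (IsIntegrallyClosed.pow_dvd_pow_iff hm).1 (dvd_of_eq h)
  · exact (IsIntegrallyClosed.pow_dvd_pow_iff hm).1 (dvd_of_eq h.symm)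

open Classical in
theorem filter_exists_pow_eq_image [Finite k] {m : ℕ} (hm : 0 < m) (d : ℕ) :
    {φ ∈ monicsOfDegree k (m * d) | ∃ g : k[X], g.Monic ∧ g ^ m = φ} =
      (monicsOfDegree k d).image (· ^ m) := by
  ext φ
  simp only [Finset.mem_filter, Finset.mem_image, mem_monicsOfDegree]
  constructor
  · rintro ⟨hφ, g, hg, rfl⟩
    refine ⟨g, ⟨?_, hg⟩, rfl⟩
    exact Nat.eq_of_mul_eq_mul_left hm (by rw [← hg.natDegree_pow, hφ.natDegree_eq])
  · rintro ⟨g, hg, rfl⟩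
    exact ⟨mul_comm m d ▸ hg.pow m, g, hg.monic, rfl⟩

open Classical in
theorem sum_card_units_of_exists_pow_eq [Finite k] {n m : ℕ} (hn : n ≠ 0) :
    ∑ φ ∈ monicsOfDegree k n with ∃ g : k[X], g.Monic ∧ g ^ m = φ, Nat.card (AdjoinRoot φ)ˣ =
      if m ∣ n then (Nat.card k - 1) * Nat.card k ^ (n - 1 + n / m) else 0 := by
  split_ifs with hmn
  · obtain ⟨d, rfl⟩ := hmn
    have hm : 0 < m := Nat.pos_of_ne_zero (left_ne_zero_of_mul hn)
    have hd : d ≠ 0 := right_ne_zero_of_mul hn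
    rw [filter_exists_pow_eq_image hm, Finset.sum_image (injOn_pow_monicsOfDegree hm.ne' d),
      ← card_coprimeMonicPairs_eq_sum hm, card_coprimeMonicPairs hd hn,
      Nat.mul_div_cancel_left _ hm]
    congr 2
    omega
  · rw [Finset.filter_eq_empty_iff.2, Finset.sum_empty]
    rintro _ hφ ⟨g, hg, rfl⟩
    exact hmn ⟨g.natDegree, by rw [← (mem_monicsOfDegree.1 hφ).natDegree_eq, hg.natDegree_pow]⟩

end PerfectPowers

theorem sum_divisors_filter_dvd_eq_sum_divisors {M : Type*} [AddCommMonoid M] {a n : ℕ}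
    (ha : a ≠ 0) (hn : n ≠ 0) (f : ℕ → M) :
    ∑ m ∈ a.divisors with m ∣ n, f m = ∑ d ∈ n.divisors, if n / d ∣ a then f (n / d) else 0 := by
  rw [Nat.sum_div_divisors n fun m ↦ if m ∣ a then f m else 0, ← Finset.sum_filter]
  refine Finset.sum_congr ?_ fun _ _ ↦ rfl
  ext m
  simp [ha, hn, and_comm]

theorem card_resPairs_eq_sum_totient {k : Type*} [Field k] [Finite k] {n : ℕ} (hn : n ≠ 0) :
    Nat.card (ResPairs k n) =
      ∑ m ∈ (Nat.card k - 1).divisors with m ∣ n, m.totient * Nat.card k ^ (n - 1 + n / m) := by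
  classical
  refine Nat.eq_of_mul_eq_mul_left (Nat.sub_pos_of_lt (Finite.one_lt_card (α := k))) ?_
  calc
    _ = ∑ φ ∈ monicsOfDegree k n, Nat.card (AdjoinRoot φ)ˣ * (resultantUnits φ).range.index := by
      rw [card_resPairs, Finset.mul_sum]
      refine Finset.sum_congr rfl fun φ _ ↦ ?_
      rw [← card_mul_card_ker, Nat.card_units]
    _ = ∑ φ ∈ monicsOfDegree k n, ∑ m ∈ (Nat.card k - 1).divisors,
          if ∃ g : k[X], g.Monic ∧ g ^ m = φ then m.totient * Nat.card (AdjoinRoot φ)ˣ else 0 := by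
      refine Finset.sum_congr rfl fun φ hφ ↦ ?_
      rw [index_range_resultantUnits (mem_monicsOfDegree.1 hφ).monic, Finset.sum_filter,
        Finset.mul_sum, Nat.card_units]
      simp_rw [mul_ite, mul_zero, mul_comm]
    _ = ∑ m ∈ (Nat.card k - 1).divisors, m.totient *
          ∑ φ ∈ monicsOfDegree k n with ∃ g : k[X], g.Monic ∧ g ^ m = φ,
            Nat.card (AdjoinRoot φ)ˣ := by
      rw [Finset.sum_comm]
      simp_rw [Finset.mul_sum, Finset.sum_filter]
    _ = _ := by
      simp_rw [sum_card_units_of_exists_pow_eq hn, Finset.mul_sum, Finset.sum_filter,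
        mul_ite, mul_zero, mul_left_comm]

/-- `|Res_n(F_q)| = Σ_{d ∣ n, (n/d) ∣ (q-1)} ϕ(n/d) · q^{n-1+d}`. -/
theorem stmt_2 (F : Type*) [Field F] [Fintype F] (q : ℕ) (hq : Fintype.card F = q)
    (n : ℕ) (hn : 1 ≤ n) :
    Nat.card (ResPairs F n) =
      ∑ d ∈ n.divisors, if (n / d) ∣ (q - 1) then Nat.totient (n / d) * q ^ (n - 1 + d) else 0 := by
  have hn0 : n ≠ 0 := Nat.one_le_iff_ne_zero.1 hn
  subst hq
  rw [Fintype.card_eq_nat_card]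
  have hq : Nat.card F - 1 ≠ 0 := (Nat.sub_pos_of_lt Finite.one_lt_card).ne'
  rw [card_resPairs_eq_sum_totient hn0, sum_divisors_filter_dvd_eq_sum_divisors hq hn0]
  refine Finset.sum_congr rfl fun d hd ↦ ?_
  rw [Nat.div_div_self (Nat.dvd_of_mem_divisors hd) hn0]
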